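/- For every real u with 0.841 < u < 1, the square-network quantum distribution P_Q^□ is nonlocal on the triangle network obtained by merging parties A₂ and A₃ into a single party M: there do not exist types Λ₁, Λ₂, Λ₃ with probability distributions μ₁, μ₂, μ₃ and response kernels p_B(a₁|λ₁,λ₃), p_M(a₂,a₃|λ₁,λ₂), p_C(a₄|λ₂,λ₃) (each a_j in {0, 1₀, 1₁, 2}, with the merged party outputting the pair (a₂,a₃) jointly) such that P_Q^□(a₁,a₂,a₃,a₄) equals the expectation over independently sampled λ₁, λ₂, λ₃ of the product p_B(a₁|λ₁,λ₃)·p_M(a₂,a₃|λ₁,λ₂)·p_C(a₄|λ₂,λ₃), for all outcomes. -/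

import Mathlib

open MeasureTheory

noncomputable def uco (u : ℝ) : Fin 2 → ℝ := ![u, Real.sqrt (1 - u ^ 2)]
noncomputable def vco (u : ℝ) : Fin 2 → ℝ := ![Real.sqrt (1 - u ^ 2), -u]

inductive Outc where
  | zero : Outc
  | one : Fin 2 → Outc
  | two : Outc
  deriving DecidableEq, Fintype

noncomputable def psiPlus : Fin 2 → Fin 2 → ℝ := fun i j =>
  if i = 0 ∧ j = 1 then (Real.sqrt 2)⁻¹ else if i = 1 ∧ j = 0 then (Real.sqrt 2)⁻¹ else 0

noncomputable def basisVec (u : ℝ) : Outc → Fin 2 → Fin 2 → ℝ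
  | Outc.zero => fun l r => if l = 0 ∧ r = 0 then 1 else 0
  | Outc.one i => fun l r => if l = 0 ∧ r = 1 then uco u i else if l = 1 ∧ r = 0 then vco u i else 0
  | Outc.two => fun l r => if l = 1 ∧ r = 1 then 1 else 0

def finNext {N : ℕ} (k : Fin N) : Fin N := ⟨(k.val + 1) % N, Nat.mod_lt _ k.pos⟩

noncomputable def ringAmp (N : ℕ) (u : ℝ) (a : Fin N → Outc) : ℝ :=
  ∑ L : Fin N → Fin 2, ∑ R : Fin N → Fin 2,
    (∏ k, basisVec u (a k) (L k) (R k)) * ∏ k, psiPlus (R k) (L (finNext k))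

noncomputable def ringP (N : ℕ) (u : ℝ) (a : Fin N → Outc) : ℝ := ringAmp N u a ^ 2

/-!
Every source flips a bit, so outcomes carry tokens (`|1⟩`) around the ring and the total number of
tokens is four. The events that `B` announces no token, that `M` announces one token and that `C`
announces no token are pairwise exclusive and each has probability `1 / 4`. Two of them share a
single source, and independence of the sources forces that source to carry a bit separating the two;
three bits can accommodate three such events of probability `1 / 4` only if all bits are fair and
every event is determined by them.

On the event that all three bits are `1`, of probability `1 / 8`, every source sends its token
clockwise and none of the exclusive outcomes occurs, so `B` and `C` announce one token and `M`
announces two. A party does not see the bit of the opposite source: flipping that bit leaves its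
output unchanged but makes a neighbour announce its special outcome, which bounds the marginals of
the part `W` of the distribution arising there by those of the observed distribution. These
marginals show that the outcomes `1₁` of `B` and `C` occur with total weight at least `u² / 4`,
whereas the bound `W ≤ P` and the marginals of `M` cap this weight. Comparing the two gives
`(1 - u²)² (1 - 2 u⁴) ≥ 0`, which fails for `u⁴ > 1 / 2`.
-/

namespace Outc

/-- The number of tokens (qubits in state `|1⟩`) announced by an outcome. -/
def tokens : Outc → ℕ
  | zero => 0
  | one _ => 1
  | two => 2

theorem tokens_zero : tokens zero = 0 := rfl

theorem tokens_le_two (a : Outc) : a.tokens ≤ 2 := by cases a <;> simp [tokens]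

theorem univ_eq : (Finset.univ : Finset Outc) = {zero, one 0, one 1, two} := by decide

theorem sum_eq {M : Type*} [AddCommMonoid M] (f : Outc → M) :
    ∑ a, f a = f zero + f (one 0) + f (one 1) + f two := by
  rw [univ_eq, Finset.sum_insert (by decide), Finset.sum_insert (by decide),
    Finset.sum_insert (by decide), Finset.sum_singleton]
  simp only [add_assoc]

theorem sum_eq_of_tokens {M : Type*} [AddCommMonoid M] {f : Outc → M}
    (hf : ∀ a, a.tokens ≠ 1 → f a = 0) : ∑ a, f a = f (one 0) + f (one 1) := by
  rw [sum_eq, hf zero (by simp [tokens]), hf two (by simp [tokens]), zero_add, add_zero]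

end Outc

/-- The transfer matrix of a party that announces `a`: its entry at `(s, r)` is the amplitude of the
outcome when the neighbours' qubits are in the states `s` and `1 - r`, the source `ψ⁺` flipping the
bit along each edge of the ring. -/
noncomputable def transfer (u : ℝ) : Outc → Matrix (Fin 2) (Fin 2) ℝ
  | Outc.zero => !![0, 0; 1, 0]
  | Outc.one i => !![vco u i, 0; 0, uco u i]
  | Outc.two => !![0, 1; 0, 0]

theorem basisVec_one_sub (u : ℝ) (a : Outc) (s r : Fin 2) :
    basisVec u a (1 - s) r = transfer u a s r := by
  rcases a with _ | i | _ <;> fin_cases s <;> fin_cases r <;> simp [basisVec, transfer]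

theorem psiPlus_apply (i j : Fin 2) : psiPlus i j = if j = 1 - i then (√2)⁻¹ else 0 := by
  fin_cases i <;> fin_cases j <;> simp [psiPlus]

theorem finNext_eq_add_one {N : ℕ} [NeZero N] (k : Fin N) : finNext k = k + 1 := by
  ext; simp [finNext, Fin.val_add]

theorem prod_psiPlus {N : ℕ} [NeZero N] (L R : Fin N → Fin 2) :
    ∏ k, psiPlus (R k) (L (finNext k)) =
      if L = fun k => 1 - R (k - 1) then (√2)⁻¹ ^ N else 0 := by
  have hL : (∀ k, L (k + 1) = 1 - R k) ↔ L = fun k => 1 - R (k - 1) := by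
    refine ⟨fun h => funext fun k => ?_, fun h k => by simp [h]⟩
    rw [← h, sub_add_cancel]
  simp only [psiPlus_apply, finNext_eq_add_one, Fintype.prod_ite_zero, hL, Finset.prod_const,
    Finset.card_univ, Fintype.card_fin]

theorem ringAmp_eq_sum_prod_transfer {N : ℕ} [NeZero N] (u : ℝ) (a : Fin N → Outc) :
    ringAmp N u a = (√2)⁻¹ ^ N * ∑ R : Fin N → Fin 2, ∏ k, transfer u (a k) (R (k - 1)) (R k) := by
  unfold ringAmp
  rw [Finset.sum_comm, Finset.mul_sum]
  refine Finset.sum_congr rfl fun R _ => ?_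
  simp only [prod_psiPlus, mul_ite, mul_zero, Finset.sum_ite_eq', Finset.mem_univ, if_true,
    basisVec_one_sub]
  exact mul_comm _ _

theorem sum_fin_four_fun {ι M : Type*} [Fintype ι] [AddCommMonoid M] (f : (Fin 4 → ι) → M) :
    ∑ x, f x = ∑ a, ∑ b, ∑ c, ∑ d, f ![a, b, c, d] := by
  have sum_cons (n : ℕ) (g : (Fin (n + 1) → ι) → M) :
      ∑ x, g x = ∑ a, ∑ y : Fin n → ι, g (Matrix.vecCons a y) := by
    rw [← (Fin.consEquiv fun _ => ι).sum_comp, Fintype.sum_prod_type]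
    rfl
  simp only [sum_cons, Fintype.sum_unique]
  rfl

theorem ringAmp_four (u : ℝ) (a b c d : Outc) :
    ringAmp 4 u ![a, b, c, d] =
      (transfer u a * transfer u b * transfer u c * transfer u d).trace / 4 := by
  have h : (√2)⁻¹ ^ 4 = (1 / 4 : ℝ) := by
    rw [inv_pow, show √2 ^ 4 = (√2 ^ 2) ^ 2 by ring, Real.sq_sqrt zero_le_two]
    norm_num
  rw [ringAmp_eq_sum_prod_transfer, h, sum_fin_four_fun]
  simp [Fin.prod_univ_four, Matrix.trace, Matrix.mul_apply, Fin.sum_univ_two]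
  ring

theorem vco_zero_sq {u : ℝ} (hu : |u| ≤ 1) : vco u 0 ^ 2 = 1 - u ^ 2 := by
  simp [vco, Real.sq_sqrt (sub_nonneg.2 ((sq_le_one_iff_abs_le_one u).2 hu))]

theorem uco_one_sq {u : ℝ} (hu : |u| ≤ 1) : uco u 1 ^ 2 = 1 - u ^ 2 := by
  simp [uco, Real.sq_sqrt (sub_nonneg.2 ((sq_le_one_iff_abs_le_one u).2 hu))]

theorem vco_one (u : ℝ) : vco u 1 = -u := by simp [vco]

theorem uco_zero (u : ℝ) : uco u 0 = u := by simp [uco]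

theorem uco_sq {u : ℝ} (hu : |u| ≤ 1) (i : Fin 2) : uco u i ^ 2 = 1 - vco u i ^ 2 := by
  fin_cases i <;> simp [vco_zero_sq hu, uco_one_sq hu, vco_one, uco_zero]

/-- The distribution on the triangle in which the second and third parties of the square are merged
into a single one, with a pair of outcomes. -/
noncomputable def mergedP (u : ℝ) (a : Outc) (m : Outc × Outc) (c : Outc) : ℝ :=
  ringP 4 u ![a, m.1, m.2, c]

theorem mergedP_eq (u : ℝ) (a : Outc) (m : Outc × Outc) (c : Outc) :
    mergedP u a m c =
      (transfer u a * transfer u m.1 * transfer u m.2 * transfer u c).trace ^ 2 / 16 := by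
  rw [mergedP, ringP, ringAmp_four, div_pow]
  norm_num

theorem tokens_of_mergedP_ne_zero {u : ℝ} {a c : Outc} {m : Outc × Outc}
    (h : mergedP u a m c ≠ 0) :
    a.tokens + m.1.tokens + m.2.tokens + c.tokens = 4 ∧ m.1.tokens + m.2.tokens ∈ Set.Icc 1 3 := by
  contrapose! h
  rw [mergedP_eq]
  obtain ⟨b, b'⟩ := m
  revert h
  rcases a with _ | _ | _ <;> rcases b with _ | _ | _ <;> rcases b' with _ | _ | _ <;>
    rcases c with _ | _ | _ <;> simp [Outc.tokens, transfer, Matrix.trace]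

theorem mergedP_ones (u : ℝ) (i j k l : Fin 2) :
    mergedP u (.one i) (.one j, .one k) (.one l) =
      (vco u i * vco u j * vco u k * vco u l + uco u i * uco u j * uco u k * uco u l) ^ 2 / 16 := by
  simp [mergedP_eq, transfer, Matrix.trace]

theorem mergedP_two_zero (u : ℝ) (i l : Fin 2) :
    mergedP u (.one i) (.two, .zero) (.one l) = vco u i ^ 2 * vco u l ^ 2 / 16 := by
  simp [mergedP_eq, transfer, Matrix.trace]
  ring

/-- The outcomes of the merged party that announce a single token, the least number it can
receive because the source between `A₂` and `A₃` is internal to it. -/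
def lightPairs : Finset (Outc × Outc) := {m | m.1.tokens + m.2.tokens = 1}

theorem mergedP_zero_lightPairs (u : ℝ) {m : Outc × Outc} (hm : m ∈ lightPairs) (c : Outc) :
    mergedP u .zero m c = 0 := by
  by_contra h
  have htokens := (tokens_of_mergedP_ne_zero h).1
  have hlight : m.1.tokens + m.2.tokens = 1 := by simpa [lightPairs] using hm
  have hc := c.tokens_le_two
  rw [Outc.tokens_zero] at htokens
  omega

theorem mergedP_lightPairs_zero (u : ℝ) (a : Outc) {m : Outc × Outc} (hm : m ∈ lightPairs) :
    mergedP u a m .zero = 0 := by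
  by_contra h
  have htokens := (tokens_of_mergedP_ne_zero h).1
  have hlight : m.1.tokens + m.2.tokens = 1 := by simpa [lightPairs] using hm
  have ha := a.tokens_le_two
  rw [Outc.tokens_zero] at htokens
  omega

theorem mergedP_zero_zero (u : ℝ) (m : Outc × Outc) : mergedP u .zero m .zero = 0 := by
  by_contra h
  obtain ⟨htokens, -, hle⟩ := tokens_of_mergedP_ne_zero h
  rw [Outc.tokens_zero] at htokens
  omega

theorem sum_lightPairs {M : Type*} [AddCommMonoid M] (f : Outc × Outc → M) :
    ∑ m ∈ lightPairs, f m = f (Outc.zero, Outc.one 0) + f (Outc.zero, Outc.one 1) +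
      f (Outc.one 0, Outc.zero) + f (Outc.one 1, Outc.zero) := by
  have h : lightPairs = {(Outc.zero, Outc.one 0), (Outc.zero, Outc.one 1),
    (Outc.one 0, Outc.zero), (Outc.one 1, Outc.zero)} := by decide
  rw [h, Finset.sum_insert (by decide), Finset.sum_insert (by decide),
    Finset.sum_insert (by decide), Finset.sum_singleton]
  simp only [add_assoc]

section Marginals

variable {u : ℝ} (hu : |u| ≤ 1)
include hu

theorem sum_mergedP_zero_left : ∑ m, ∑ c, mergedP u .zero m c = 1 / 4 := by
  simp [mergedP_eq, transfer, Matrix.trace, Outc.sum_eq, Fintype.sum_prod_type,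
    mul_pow, uco_zero, vco_one, vco_zero_sq hu, uco_one_sq hu]
  ring

theorem sum_mergedP_zero_right : ∑ a, ∑ m, mergedP u a m .zero = 1 / 4 := by
  simp [mergedP_eq, transfer, Matrix.trace, Outc.sum_eq, Fintype.sum_prod_type,
    mul_pow, uco_zero, vco_one, vco_zero_sq hu, uco_one_sq hu]
  ring

theorem sum_mergedP_lightPairs : ∑ a, ∑ m ∈ lightPairs, ∑ c, mergedP u a m c = 1 / 4 := by
  simp [mergedP_eq, transfer, Matrix.trace, Outc.sum_eq, sum_lightPairs,
    mul_pow, uco_zero, vco_one, vco_zero_sq hu, uco_one_sq hu]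
  ring

theorem sum_mergedP_one_zero (i : Fin 2) : ∑ m, mergedP u (.one i) m .zero = vco u i ^ 2 / 8 := by
  simp [mergedP_eq, transfer, Matrix.trace, Outc.sum_eq, Fintype.sum_prod_type,
    mul_pow, uco_sq hu]
  ring

theorem sum_mergedP_lightPairs_one (l : Fin 2) :
    ∑ a, ∑ m ∈ lightPairs, mergedP u a m (.one l) = vco u l ^ 2 / 8 := by
  simp [mergedP_eq, transfer, Matrix.trace, Outc.sum_eq, sum_lightPairs,
    mul_pow, uco_sq hu]
  ring

end Marginals

theorem sum_mergedP_zero_ones (u : ℝ) (j k : Fin 2) :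
    ∑ c, mergedP u .zero (.one j, .one k) c = vco u j ^ 2 * vco u k ^ 2 / 16 := by
  simp [mergedP_eq, transfer, Matrix.trace, Outc.sum_eq]
  ring

theorem sum_mergedP_zero_zero_two (u : ℝ) : ∑ c, mergedP u .zero (.zero, .two) c = 0 := by
  simp [mergedP_eq, transfer, Matrix.trace]

section Rigidity

open ProbabilityTheory Set

variable {Ω α β γ : Type*} [MeasurableSpace Ω] [MeasurableSpace α] [MeasurableSpace β]
  [MeasurableSpace γ] {π : Measure Ω} [IsProbabilityMeasure π]
  {X : Ω → α} {Y : Ω → β} {Z : Ω → γ}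

theorem ae_prodMk_mem_iff_of_indepFun (hX : Measurable X) (hY : Measurable Y) (h : X ⟂ᵢ[π] Y)
    {s : Set (α × β)} (hs : MeasurableSet s) :
    (∀ᵐ ω ∂π, (X ω, Y ω) ∈ s) ↔ ∀ᵐ x ∂π.map X, ∀ᵐ y ∂π.map Y, (x, y) ∈ s := by
  have := Measure.isProbabilityMeasure_map (μ := π) hX.aemeasurable
  have := Measure.isProbabilityMeasure_map (μ := π) hY.aemeasurable
  rw [← Measure.ae_prod_mem_iff_ae_ae_mem hs,
    ← h.map_prod_eq_prod_map_map hX.aemeasurable hY.aemeasurable]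
  exact (ae_map_iff (hX.prodMk hY).aemeasurable hs).symm

theorem ae_mem_imp_measure_section_ne_zero (hX : Measurable X) (hZ : Measurable Z)
    (h : X ⟂ᵢ[π] Z) {A : Set (γ × α)} (hA : MeasurableSet A) :
    ∀ᵐ ω ∂π, (Z ω, X ω) ∈ A → π.map Z ((·, X ω) ⁻¹' A) ≠ 0 := by
  have := Measure.isProbabilityMeasure_map (μ := π) hZ.aemeasurable
  have hT : MeasurableSet {x | π.map Z ((·, x) ⁻¹' A) ≠ 0} :=
    (measurable_measure_prodMk_right hA) (measurableSet_singleton 0).compl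
  have hS : MeasurableSet {p : α × γ | (p.2, p.1) ∈ A → π.map Z ((·, p.1) ⁻¹' A) ≠ 0} :=
    (measurable_swap hA).imp (measurable_fst hT)
  refine (ae_prodMk_mem_iff_of_indepFun hX hZ h hS).2 (.of_forall fun x => ?_)
  by_cases hx : π.map Z ((·, x) ⁻¹' A) = 0
  · filter_upwards [measure_eq_zero_iff_ae_notMem.1 hx] with z hz hzA using absurd hzA hz
  · exact .of_forall fun _ _ => hx

/-- The random variables `X`, `Y`, `Z` are measurable and mutually independent. They model the
three sources of a triangle network; each party sees two of them. Independence is spelled out in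
the form that is invariant under cyclic rotation. -/
structure IndepSources (X : Ω → α) (Y : Ω → β) (Z : Ω → γ) (π : Measure Ω) : Prop where
  measurable₁ : Measurable X
  measurable₂ : Measurable Y
  measurable₃ : Measurable Z
  indep₁ : X ⟂ᵢ[π] fun ω => (Y ω, Z ω)
  indep₂ : Y ⟂ᵢ[π] fun ω => (Z ω, X ω)
  indep₃ : Z ⟂ᵢ[π] fun ω => (X ω, Y ω)

namespace IndepSources

omit [IsProbabilityMeasure π] in
theorem rotate (h : IndepSources X Y Z π) : IndepSources Y Z X π :=
  ⟨h.measurable₂, h.measurable₃, h.measurable₁, h.indep₂, h.indep₃, h.indep₁⟩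

omit [IsProbabilityMeasure π] in
theorem measureReal_preimage_inter (h : IndepSources X Y Z π) {R : Set α} {T : Set γ}
    (hR : MeasurableSet R) (hT : MeasurableSet T) :
    π.real (X ⁻¹' R ∩ Z ⁻¹' T) = π.real (X ⁻¹' R) * π.real (Z ⁻¹' T) := by
  have hXZ : X ⟂ᵢ[π] Z := h.indep₁.comp measurable_id measurable_snd
  simp only [measureReal_def, hXZ.measure_inter_preimage_eq_mul _ _ hR hT, ENNReal.toReal_mul]

omit [IsProbabilityMeasure π] in
theorem measureReal_preimage_inter_inter (h : IndepSources X Y Z π) {R : Set α} {S : Set β}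
    {T : Set γ} (hR : MeasurableSet R) (hS : MeasurableSet S) (hT : MeasurableSet T) :
    π.real (X ⁻¹' R ∩ Y ⁻¹' S ∩ Z ⁻¹' T) =
      π.real (X ⁻¹' R) * π.real (Y ⁻¹' S) * π.real (Z ⁻¹' T) := by
  have hX := h.indep₁.measure_inter_preimage_eq_mul _ _ hR (hS.prod hT)
  rw [mk_preimage_prod, ← inter_assoc] at hX
  rw [mul_assoc, mul_comm (π.real (Y ⁻¹' S)), ← h.rotate.rotate.measureReal_preimage_inter hT hS,
    inter_comm (Z ⁻¹' T)]
  simp only [measureReal_def, hX, ENNReal.toReal_mul]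

theorem measureReal_preimage_diff (h : IndepSources X Y Z π) {R : Set α} {T : Set γ}
    (hR : MeasurableSet R) (hT : MeasurableSet T) :
    π.real (X ⁻¹' R \ Z ⁻¹' T) = π.real (X ⁻¹' R) * (1 - π.real (Z ⁻¹' T)) := by
  rw [sdiff_eq, ← preimage_compl, h.measureReal_preimage_inter hR hT.compl, preimage_compl,
    probReal_compl_eq_one_sub (h.measurable₃ hT)]

theorem exists_separating_set (h : IndepSources X Y Z π) {f : γ × α → ℝ} {g : α × β → ℝ}
    (hf : Measurable f) (hg : Measurable g) (hfg : ∀ᵐ ω ∂π, f (Z ω, X ω) * g (X ω, Y ω) = 0) :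
    ∃ T : Set α, MeasurableSet T ∧ (∀ᵐ ω ∂π, f (Z ω, X ω) ≠ 0 → X ω ∈ T) ∧
      ∀ᵐ ω ∂π, g (X ω, Y ω) ≠ 0 → X ω ∉ T := by
  obtain ⟨hX, hY, hZ, hXYZ, hYZX, -⟩ := h
  have hYZ : Y ⟂ᵢ[π] Z := hYZX.comp measurable_id measurable_fst
  have := Measure.isProbabilityMeasure_map (μ := π) hZ.aemeasurable
  have := Measure.isProbabilityMeasure_map (μ := π) hY.aemeasurable
  set A : Set (γ × α) := {p | f p ≠ 0}
  set B : Set (α × β) := {p | g p ≠ 0}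
  have hA : MeasurableSet A := measurableSet_support hf
  have hB : MeasurableSet B := measurableSet_support hg
  have hAB : ∀ᵐ ω ∂π, (Z ω, X ω) ∈ A → (X ω, Y ω) ∉ B := by
    filter_upwards [hfg] with ω h hA hB using mul_ne_zero hA hB h
  let T : Set α := {x | π.map Z ((·, x) ⁻¹' A) ≠ 0}
  have hT : MeasurableSet T :=
    (measurable_measure_prodMk_right hA) (measurableSet_singleton 0).compl
  refine ⟨T, hT, ae_mem_imp_measure_section_ne_zero hX hZ
    (hXYZ.comp measurable_id measurable_snd) hA, ?_⟩
  have hS : MeasurableSet {p : α × β | p ∈ B → p.1 ∉ T} := hB.imp (measurable_fst hT.compl)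
  have hN : MeasurableSet {p : α × β × γ | (p.2.2, p.1) ∈ A → (p.1, p.2.1) ∉ B} :=
    ((by fun_prop : Measurable fun p : α × β × γ => (p.2.2, p.1)) hA).imp
      ((by fun_prop : Measurable fun p : α × β × γ => (p.1, p.2.1)) hB.compl)
  refine (ae_prodMk_mem_iff_of_indepFun hX hY (hXYZ.comp measurable_id measurable_fst) hS).2 ?_
  have hsections := (ae_prodMk_mem_iff_of_indepFun hX (hY.prodMk hZ) hXYZ hN).1 hAB
  rw [hYZ.map_prod_eq_prod_map_map hY.aemeasurable hZ.aemeasurable] at hsections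
  filter_upwards [hsections] with x hx
  by_cases hxT : x ∈ T
  · have hrect : π.map Y (Prod.mk x ⁻¹' B) * π.map Z ((·, x) ⁻¹' A) = 0 := by
      rw [← Measure.prod_prod, measure_eq_zero_iff_ae_notMem]
      filter_upwards [hx] with p hp h using hp h.2 h.1
    have hnull := (mul_eq_zero.1 hrect).resolve_right hxT
    filter_upwards [measure_eq_zero_iff_ae_notMem.1 hnull] with y hy h using absurd h hy
  · exact .of_forall fun _ _ => hxT

end IndepSources

theorem eq_half_of_quarter_le {r s t : ℝ} (hr : r ∈ Icc 0 1) (hs : s ∈ Icc 0 1) (ht : t ∈ Icc 0 1)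
    (hrt : 1 / 4 ≤ r * (1 - t)) (hsr : 1 / 4 ≤ s * (1 - r)) (hts : 1 / 4 ≤ t * (1 - s)) :
    r = 1 / 2 ∧ s = 1 / 2 ∧ t = 1 / 2 := by
  have le_of_quarter_le {p q : ℝ} (h : 1 / 4 ≤ p * (1 - q)) (hp : 0 ≤ p) (hq : q ≤ 1) : q ≤ p := by
    nlinarith [sq_nonneg (p - (1 - q))]
  have htr := le_of_quarter_le hrt hr.1 ht.2
  have hrs := le_of_quarter_le hsr hs.1 hr.2
  have hst := le_of_quarter_le hts ht.1 hs.2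
  obtain rfl : r = s := by linarith
  obtain rfl : r = t := by linarith
  have : r = 1 / 2 := by nlinarith [sq_nonneg (r - 1 / 2)]
  exact ⟨this, this, this⟩

section Indicator

variable {f : Ω → ℝ} {E : Set Ω} (hE : MeasurableSet E) (hf : Measurable f)
  (hf01 : ∀ ω, f ω ∈ Icc 0 1) (hfE : ∀ᵐ ω ∂π, f ω ≠ 0 → ω ∈ E)

include hf01 hfE in
omit [IsProbabilityMeasure π] in
theorem ae_le_indicator_one_of_support : f ≤ᵐ[π] E.indicator 1 := by
  filter_upwards [hfE] with ω hω
  by_cases hωE : ω ∈ E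
  · simpa [hωE] using (hf01 ω).2
  · simpa [hωE] using (not_not.1 (mt hω hωE)).le

include hE hf hf01 hfE

theorem integral_le_measureReal_of_support : ∫ ω, f ω ∂π ≤ π.real E := by
  rw [← integral_indicator_one hE]
  exact integral_mono_ae (.of_mem_Icc 0 1 hf.aemeasurable (.of_forall hf01))
    ((integrable_const 1).indicator hE) (ae_le_indicator_one_of_support hf01 hfE)

theorem ae_eq_indicator_of_measureReal_le_integral (h : π.real E ≤ ∫ ω, f ω ∂π) :
    f =ᵐ[π] E.indicator 1 := by
  refine (integral_eq_iff_of_ae_le (.of_mem_Icc 0 1 hf.aemeasurable (.of_forall hf01))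
    ((integrable_const 1).indicator hE) (ae_le_indicator_one_of_support hf01 hfE)).1 ?_
  rw [integral_indicator_one hE]
  exact le_antisymm (integral_le_measureReal_of_support hE hf hf01 hfE) h

end Indicator

namespace IndepSources

theorem setIntegral_inter_eq_integral_mul (h : IndepSources X Y Z π) {S : Set β} {T : Set γ}
    (hS : MeasurableSet S) (hT : MeasurableSet T) (hS2 : π.real (Y ⁻¹' S) = 1 / 2)
    {k : β × γ → ℝ} (hk : (fun ω => k (Y ω, Z ω)) =ᵐ[π] (Z ⁻¹' T \ Y ⁻¹' S).indicator 1)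
    {G : γ × α → ℝ} (hG : Measurable G) :
    ∫ ω in Y ⁻¹' S ∩ Z ⁻¹' T, G (Z ω, X ω) ∂π = ∫ ω, G (Z ω, X ω) * k (Y ω, Z ω) ∂π := by
  set H : γ × α → ℝ := (Prod.fst ⁻¹' T).indicator G
  have hH : Measurable H := hG.indicator (measurable_fst hT)
  have setIntegral_H {S' : Set β} (hS' : MeasurableSet S') :
      ∫ ω in Y ⁻¹' S', H (Z ω, X ω) ∂π = π.real (Y ⁻¹' S') * ∫ ω, H (Z ω, X ω) ∂π :=
    Indep.setIntegral_eq_mul h.measurable₂.comap_le h.indep₂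
      (h.measurable₃.prodMk h.measurable₁).aemeasurable ⟨S', hS', rfl⟩ hH.aestronglyMeasurable
  have hZ := h.measurable₃ hT
  have hS2' : π.real (Y ⁻¹' Sᶜ) = 1 / 2 := by
    rw [preimage_compl, probReal_compl_eq_one_sub (h.measurable₂ hS), hS2]
    norm_num
  calc ∫ ω in Y ⁻¹' S ∩ Z ⁻¹' T, G (Z ω, X ω) ∂π
      = ∫ ω in Y ⁻¹' S, H (Z ω, X ω) ∂π := (setIntegral_indicator hZ).symm
    _ = ∫ ω in Y ⁻¹' Sᶜ, H (Z ω, X ω) ∂π := by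
      rw [setIntegral_H hS, setIntegral_H hS.compl, hS2, hS2']
    _ = ∫ ω in Y ⁻¹' Sᶜ ∩ Z ⁻¹' T, G (Z ω, X ω) ∂π := setIntegral_indicator hZ
    _ = ∫ ω, G (Z ω, X ω) * k (Y ω, Z ω) ∂π := by
      rw [← integral_indicator ((h.measurable₂ hS.compl).inter hZ)]
      refine integral_congr_ae ?_
      filter_upwards [hk] with ω hω
      by_cases hY : Y ω ∈ S <;> by_cases hZ : Z ω ∈ T <;> simp [hω, hY, hZ]

theorem setIntegral_le_integral_mul (h : IndepSources X Y Z π) (R : Set α) {S : Set β} {T : Set γ}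
    (hS : MeasurableSet S) (hT : MeasurableSet T) (hS2 : π.real (Y ⁻¹' S) = 1 / 2)
    {k : β × γ → ℝ} (hk : (fun ω => k (Y ω, Z ω)) =ᵐ[π] (Z ⁻¹' T \ Y ⁻¹' S).indicator 1)
    {G : γ × α → ℝ} (hG : Measurable G) (hG01 : ∀ p, G p ∈ Icc 0 1) :
    ∫ ω in X ⁻¹' R ∩ Y ⁻¹' S ∩ Z ⁻¹' T, G (Z ω, X ω) ∂π ≤ ∫ ω, G (Z ω, X ω) * k (Y ω, Z ω) ∂π := by
  have mG : Measurable fun ω => G (Z ω, X ω) := hG.comp (h.measurable₃.prodMk h.measurable₁)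
  rw [← h.setIntegral_inter_eq_integral_mul hS hT hS2 hk hG, inter_assoc]
  exact setIntegral_mono_set (.of_mem_Icc 0 1 mG.aemeasurable (.of_forall fun _ => hG01 _))
    (.of_forall fun _ => (hG01 _).1) inter_subset_right.eventuallyLE

section Bits

variable {f : γ × α → ℝ} {g : α × β → ℝ} {k : β × γ → ℝ}
  (h : IndepSources X Y Z π) (hf : Measurable f) (hg : Measurable g) (hk : Measurable k)
  (hfg : ∀ᵐ ω ∂π, f (Z ω, X ω) * g (X ω, Y ω) = 0)
  (hgk : ∀ᵐ ω ∂π, g (X ω, Y ω) * k (Y ω, Z ω) = 0)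
  (hkf : ∀ᵐ ω ∂π, k (Y ω, Z ω) * f (Z ω, X ω) = 0)
include h hf hg hk hfg hgk hkf

theorem exists_separating_sets :
    ∃ R S T, (MeasurableSet R ∧ MeasurableSet S ∧ MeasurableSet T) ∧
      (∀ᵐ ω ∂π, f (Z ω, X ω) ≠ 0 → ω ∈ X ⁻¹' R \ Z ⁻¹' T) ∧
      (∀ᵐ ω ∂π, g (X ω, Y ω) ≠ 0 → ω ∈ Y ⁻¹' S \ X ⁻¹' R) ∧
      ∀ᵐ ω ∂π, k (Y ω, Z ω) ≠ 0 → ω ∈ Z ⁻¹' T \ Y ⁻¹' S := by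
  obtain ⟨R, hR, hfR, hgR⟩ := h.exists_separating_set hf hg hfg
  obtain ⟨S, hS, hgS, hkS⟩ := h.rotate.exists_separating_set hg hk hgk
  obtain ⟨T, hT, hkT, hfT⟩ := h.rotate.rotate.exists_separating_set hk hf hkf
  refine ⟨R, S, T, ⟨hR, hS, hT⟩, ?_, ?_, ?_⟩
  · filter_upwards [hfR, hfT] with ω hR hT hω using ⟨hR hω, hT hω⟩
  · filter_upwards [hgS, hgR] with ω hS hR hω using ⟨hS hω, hR hω⟩
  · filter_upwards [hkT, hkS] with ω hT hS hω using ⟨hT hω, hS hω⟩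

theorem exists_bits (hf01 : ∀ p, f p ∈ Icc 0 1) (hg01 : ∀ p, g p ∈ Icc 0 1)
    (hk01 : ∀ p, k p ∈ Icc 0 1) (hf4 : 1 / 4 ≤ ∫ ω, f (Z ω, X ω) ∂π)
    (hg4 : 1 / 4 ≤ ∫ ω, g (X ω, Y ω) ∂π) (hk4 : 1 / 4 ≤ ∫ ω, k (Y ω, Z ω) ∂π) :
    ∃ R S T, (MeasurableSet R ∧ MeasurableSet S ∧ MeasurableSet T) ∧
      (π.real (X ⁻¹' R) = 1 / 2 ∧ π.real (Y ⁻¹' S) = 1 / 2 ∧ π.real (Z ⁻¹' T) = 1 / 2) ∧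
      (fun ω => f (Z ω, X ω)) =ᵐ[π] (X ⁻¹' R \ Z ⁻¹' T).indicator 1 ∧
      (fun ω => g (X ω, Y ω)) =ᵐ[π] (Y ⁻¹' S \ X ⁻¹' R).indicator 1 ∧
      (fun ω => k (Y ω, Z ω)) =ᵐ[π] (Z ⁻¹' T \ Y ⁻¹' S).indicator 1 := by
  obtain ⟨R, S, T, ⟨hR, hS, hT⟩, hfE, hgE, hkE⟩ := h.exists_separating_sets hf hg hk hfg hgk hkf
  have mf : Measurable fun ω => f (Z ω, X ω) := hf.comp (h.measurable₃.prodMk h.measurable₁)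
  have mg : Measurable fun ω => g (X ω, Y ω) := hg.comp (h.measurable₁.prodMk h.measurable₂)
  have mk : Measurable fun ω => k (Y ω, Z ω) := hk.comp (h.measurable₂.prodMk h.measurable₃)
  have hX := h.measurable₁ hR
  have hY := h.measurable₂ hS
  have hZ := h.measurable₃ hT
  have hrt := h.measureReal_preimage_diff hR hT
  have hsr := h.rotate.measureReal_preimage_diff hS hR
  have hts := h.rotate.rotate.measureReal_preimage_diff hT hS
  have mem_Icc (E : Set Ω) : π.real E ∈ Icc (0 : ℝ) 1 := ⟨measureReal_nonneg, measureReal_le_one⟩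
  obtain ⟨hr, hs, ht⟩ := eq_half_of_quarter_le (mem_Icc (X ⁻¹' R)) (mem_Icc (Y ⁻¹' S))
    (mem_Icc (Z ⁻¹' T))
    (hrt ▸ hf4.trans (integral_le_measureReal_of_support (hX.diff hZ) mf (fun _ => hf01 _) hfE))
    (hsr ▸ hg4.trans (integral_le_measureReal_of_support (hY.diff hX) mg (fun _ => hg01 _) hgE))
    (hts ▸ hk4.trans (integral_le_measureReal_of_support (hZ.diff hY) mk (fun _ => hk01 _) hkE))
  refine ⟨R, S, T, ⟨hR, hS, hT⟩, ⟨hr, hs, ht⟩,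
    ae_eq_indicator_of_measureReal_le_integral (hX.diff hZ) mf (fun _ => hf01 _) hfE ?_,
    ae_eq_indicator_of_measureReal_le_integral (hY.diff hX) mg (fun _ => hg01 _) hgE ?_,
    ae_eq_indicator_of_measureReal_le_integral (hZ.diff hY) mk (fun _ => hk01 _) hkE ?_⟩ <;>
  simp only [hrt, hsr, hts, hr, hs, ht] <;> linarith

theorem exists_clockwise_event (hf01 : ∀ p, f p ∈ Icc 0 1) (hg01 : ∀ p, g p ∈ Icc 0 1)
    (hk01 : ∀ p, k p ∈ Icc 0 1) (hf4 : 1 / 4 ≤ ∫ ω, f (Z ω, X ω) ∂π)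
    (hg4 : 1 / 4 ≤ ∫ ω, g (X ω, Y ω) ∂π) (hk4 : 1 / 4 ≤ ∫ ω, k (Y ω, Z ω) ∂π) :
    ∃ E, π.real E = 1 / 8 ∧
      (∀ᵐ ω ∂π, ω ∈ E → f (Z ω, X ω) = 0 ∧ g (X ω, Y ω) = 0 ∧ k (Y ω, Z ω) = 0) ∧
      (∀ G, Measurable G → (∀ p, G p ∈ Icc 0 1) →
        ∫ ω in E, G (Z ω, X ω) ∂π ≤ ∫ ω, G (Z ω, X ω) * k (Y ω, Z ω) ∂π) ∧
      (∀ G, Measurable G → (∀ p, G p ∈ Icc 0 1) →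
        ∫ ω in E, G (X ω, Y ω) ∂π ≤ ∫ ω, G (X ω, Y ω) * f (Z ω, X ω) ∂π) ∧
      ∀ G, Measurable G → (∀ p, G p ∈ Icc 0 1) →
        ∫ ω in E, G (Y ω, Z ω) ∂π ≤ ∫ ω, G (Y ω, Z ω) * g (X ω, Y ω) ∂π := by
  obtain ⟨R, S, T, ⟨hR, hS, hT⟩, ⟨hr, hs, ht⟩, hfE, hgE, hkE⟩ :=
    h.exists_bits hf hg hk hfg hgk hkf hf01 hg01 hk01 hf4 hg4 hk4
  refine ⟨X ⁻¹' R ∩ Y ⁻¹' S ∩ Z ⁻¹' T, ?_, ?_, ?_, ?_, ?_⟩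
  · rw [h.measureReal_preimage_inter_inter hR hS hT, hr, hs, ht]
    norm_num
  · filter_upwards [hfE, hgE, hkE] with ω hf hg hk ⟨⟨hR, hS⟩, hT⟩
    simp [hf, hg, hk, mem_preimage.1 hR, mem_preimage.1 hS, mem_preimage.1 hT]
  · exact fun G => h.setIntegral_le_integral_mul R hS hT hs hkE
  · have hE : X ⁻¹' R ∩ Y ⁻¹' S ∩ Z ⁻¹' T = Y ⁻¹' S ∩ Z ⁻¹' T ∩ X ⁻¹' R := by
      rw [inter_assoc, inter_comm]
    exact fun G => hE ▸ h.rotate.setIntegral_le_integral_mul S hT hR ht hfE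
  · have hE : X ⁻¹' R ∩ Y ⁻¹' S ∩ Z ⁻¹' T = Z ⁻¹' T ∩ X ⁻¹' R ∩ Y ⁻¹' S := by
      rw [inter_comm, inter_assoc]
    exact fun G => hE ▸ h.rotate.rotate.setIntegral_le_integral_mul T hR hS hr hgE

end Bits

end IndepSources

end Rigidity

/-- A response kernel with outcomes in `ι`: each input is mapped to a probability vector. -/
structure IsResponse {ι α : Type*} [Fintype ι] [MeasurableSpace α] (q : ι → α → ℝ) : Prop where
  measurable : ∀ i, Measurable (q i)
  nonneg : ∀ i x, 0 ≤ q i x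
  sum_eq_one : ∀ x, ∑ i, q i x = 1

namespace IsResponse

variable {ι κ τ α β : Type*} [Fintype ι] [Fintype κ] [Fintype τ] [MeasurableSpace α]
  [MeasurableSpace β]

theorem comp {q : ι → α → ℝ} (hq : IsResponse q) {φ : β → α} (hφ : Measurable φ) :
    IsResponse fun i x => q i (φ x) :=
  ⟨fun i => (hq.measurable i).comp hφ, fun i _ => hq.nonneg i _, fun _ => hq.sum_eq_one _⟩

theorem sum_mem_Icc {q : ι → α → ℝ} (hq : IsResponse q) (A : Finset ι) (x : α) :
    ∑ i ∈ A, q i x ∈ Set.Icc 0 1 :=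
  ⟨Finset.sum_nonneg fun i _ => hq.nonneg i x, hq.sum_eq_one x ▸
    Finset.sum_le_sum_of_subset_of_nonneg A.subset_univ fun i _ _ => hq.nonneg i x⟩

theorem mem_Icc {q : ι → α → ℝ} (hq : IsResponse q) (i : ι) (x : α) : q i x ∈ Set.Icc 0 1 := by
  simpa using hq.sum_mem_Icc {i} x

theorem eq_zero_of_sum_eq_zero {q : ι → α → ℝ} (hq : IsResponse q) {A : Finset ι} {x : α}
    (h : ∑ i ∈ A, q i x = 0) {i : ι} (hi : i ∈ A) : q i x = 0 :=
  (Finset.sum_eq_zero_iff_of_nonneg fun i _ => hq.nonneg i x).1 h i hi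

variable {b : ι → α → ℝ} {m : κ → α → ℝ} {c : τ → α → ℝ} (hb : IsResponse b) (hm : IsResponse m)
  (hc : IsResponse c) (ν : Measure α)
include hb hm hc

theorem mul_mul_nonneg (i : ι) (j : κ) (k : τ) (x : α) : 0 ≤ b i x * m j x * c k x :=
  mul_nonneg (mul_nonneg (hb.nonneg i x) (hm.nonneg j x)) (hc.nonneg k x)

theorem integrable_mul_mul [IsFiniteMeasure ν] (i : ι) (j : κ) (k : τ) :
    Integrable (fun x => b i x * m j x * c k x) ν := by
  refine .of_mem_Icc 0 1
    (((hb.measurable i).mul (hm.measurable j)).mul (hc.measurable k)).aemeasurable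
    (.of_forall fun x => ⟨mul_mul_nonneg hb hm hc i j k x, ?_⟩)
  exact mul_le_one₀ (mul_le_one₀ (hb.mem_Icc i x).2 (hm.mem_Icc j x).1 (hm.mem_Icc j x).2)
    (hc.mem_Icc k x).1 (hc.mem_Icc k x).2

theorem sum_integral_mul_mul [IsFiniteMeasure ν] (A : Finset ι) (B : Finset κ) (C : Finset τ) :
    ∑ i ∈ A, ∑ j ∈ B, ∑ k ∈ C, ∫ x, b i x * m j x * c k x ∂ν =
      ∫ x, (∑ i ∈ A, b i x) * (∑ j ∈ B, m j x) * ∑ k ∈ C, c k x ∂ν := by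
  have expand (x : α) : (∑ i ∈ A, b i x) * (∑ j ∈ B, m j x) * ∑ k ∈ C, c k x =
      ∑ p ∈ A ×ˢ B ×ˢ C, b p.1 x * m p.2.1 x * c p.2.2 x := by
    simp only [Finset.sum_product, ← Finset.mul_sum, ← Finset.sum_mul]
  simp only [expand]
  rw [integral_finsetSum _ fun p _ => integrable_mul_mul hb hm hc ν p.1 p.2.1 p.2.2]
  simp only [Finset.sum_product]

theorem ae_sum_mul_sum_mul_sum_eq_zero [IsFiniteMeasure ν] {A : Finset ι} {B : Finset κ}
    {C : Finset τ} (h : ∀ i ∈ A, ∀ j ∈ B, ∀ k ∈ C, ∫ x, b i x * m j x * c k x ∂ν = 0) :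
    ∀ᵐ x ∂ν, (∑ i ∈ A, b i x) * (∑ j ∈ B, m j x) * ∑ k ∈ C, c k x = 0 := by
  have term_eq_zero (i) (hi : i ∈ A) (j) (hj : j ∈ B) (k) (hk : k ∈ C) :
      ∀ᵐ x ∂ν, b i x * m j x * c k x = 0 :=
    (integral_eq_zero_iff_of_nonneg (mul_mul_nonneg hb hm hc i j k)
      (integrable_mul_mul hb hm hc ν i j k)).1 (h i hi j hj k hk)
  simp only [← Filter.eventually_all_finset] at term_eq_zero
  filter_upwards [term_eq_zero] with x hx
  simp only [Finset.sum_mul, Finset.mul_sum]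
  exact Finset.sum_eq_zero fun k hk => Finset.sum_eq_zero fun j hj =>
    Finset.sum_eq_zero fun i hi => hx i hi j hj k hk

end IsResponse

/-- `W` is the contribution to the distribution `P` of an event that is incompatible with the
outcomes in `A`, `B` and `C`; for the ring, that every source sends its token clockwise. Its
marginals are bounded by the probability of the same outcome together with the special outcome of
the neighbouring party. -/
structure IsClockwisePart {ι κ τ : Type*} [Fintype ι] [Fintype κ] [Fintype τ]
    (P W : ι → κ → τ → ℝ) (A : Finset ι) (B : Finset κ) (C : Finset τ) : Prop where
  nonneg : ∀ i j k, 0 ≤ W i j k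
  le : ∀ i j k, W i j k ≤ P i j k
  eq_zero₁ : ∀ i ∈ A, ∀ j k, W i j k = 0
  eq_zero₂ : ∀ i, ∀ j ∈ B, ∀ k, W i j k = 0
  eq_zero₃ : ∀ i j, ∀ k ∈ C, W i j k = 0
  sum_eq : ∑ i, ∑ j, ∑ k, W i j k = 1 / 8
  sum_le₁ : ∀ i, ∑ j, ∑ k, W i j k ≤ ∑ j, ∑ k ∈ C, P i j k
  sum_le₂ : ∀ j, ∑ i, ∑ k, W i j k ≤ ∑ i ∈ A, ∑ k, P i j k
  sum_le₃ : ∀ k, ∑ i, ∑ j, W i j k ≤ ∑ i, ∑ j ∈ B, P i j k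

section Triangle

open Set

variable {Ω α β γ ι κ τ : Type*} [MeasurableSpace Ω] [MeasurableSpace α] [MeasurableSpace β]
  [MeasurableSpace γ] [Fintype ι] [Fintype κ] [Fintype τ] {π : Measure Ω} [IsProbabilityMeasure π]
  {X : Ω → α} {Y : Ω → β} {Z : Ω → γ} {b : ι → γ × α → ℝ} {m : κ → α × β → ℝ} {c : τ → β × γ → ℝ}
  {P : ι → κ → τ → ℝ} {A : Finset ι} {B : Finset κ} {C : Finset τ}

variable (h : IndepSources X Y Z π) (hb : IsResponse b) (hm : IsResponse m) (hc : IsResponse c)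
  (hP : ∀ i j k, P i j k = ∫ ω, b i (Z ω, X ω) * m j (X ω, Y ω) * c k (Y ω, Z ω) ∂π)
  (hAB : ∀ i ∈ A, ∀ j ∈ B, ∀ k, P i j k = 0) (hBC : ∀ i, ∀ j ∈ B, ∀ k ∈ C, P i j k = 0)
  (hCA : ∀ i ∈ A, ∀ j, ∀ k ∈ C, P i j k = 0) (hA : 1 / 4 ≤ ∑ i ∈ A, ∑ j, ∑ k, P i j k)
  (hB : 1 / 4 ≤ ∑ i, ∑ j ∈ B, ∑ k, P i j k) (hC : 1 / 4 ≤ ∑ i, ∑ j, ∑ k ∈ C, P i j k)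
include h hb hm hc hP hAB hBC hCA hA hB hC

theorem exists_clockwise_event_of_isResponse :
    ∃ E, π.real E = 1 / 8 ∧
      (∀ᵐ ω ∂π, ω ∈ E → ∑ i ∈ A, b i (Z ω, X ω) = 0 ∧ ∑ j ∈ B, m j (X ω, Y ω) = 0 ∧
        ∑ k ∈ C, c k (Y ω, Z ω) = 0) ∧
      (∀ i, ∫ ω in E, b i (Z ω, X ω) ∂π ≤ ∑ j, ∑ k ∈ C, P i j k) ∧
      (∀ j, ∫ ω in E, m j (X ω, Y ω) ∂π ≤ ∑ i ∈ A, ∑ k, P i j k) ∧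
      ∀ k, ∫ ω in E, c k (Y ω, Z ω) ∂π ≤ ∑ i, ∑ j ∈ B, P i j k := by
  have hb' := hb.comp (h.measurable₃.prodMk h.measurable₁)
  have hm' := hm.comp (h.measurable₁.prodMk h.measurable₂)
  have hc' := hc.comp (h.measurable₂.prodMk h.measurable₃)
  have sum_P (A : Finset ι) (B : Finset κ) (C : Finset τ) : ∑ i ∈ A, ∑ j ∈ B, ∑ k ∈ C, P i j k =
      ∫ ω, (∑ i ∈ A, b i (Z ω, X ω)) * (∑ j ∈ B, m j (X ω, Y ω)) * ∑ k ∈ C, c k (Y ω, Z ω) ∂π := by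
    simp only [hP, hb'.sum_integral_mul_mul hm' hc' π A B C]
  have ae_eq_zero {A : Finset ι} {B : Finset κ} {C : Finset τ}
      (hABC : ∀ i ∈ A, ∀ j ∈ B, ∀ k ∈ C, P i j k = 0) :=
    hb'.ae_sum_mul_sum_mul_sum_eq_zero hm' hc' π (by simpa only [hP] using hABC)
  obtain ⟨E, hE8, h0, hbE, hmE, hcE⟩ := h.exists_clockwise_event
    (f := fun p => ∑ i ∈ A, b i p) (g := fun p => ∑ j ∈ B, m j p) (k := fun p => ∑ k ∈ C, c k p)
    (Finset.measurable_fun_sum _ fun i _ => hb.measurable i)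
    (Finset.measurable_fun_sum _ fun j _ => hm.measurable j)
    (Finset.measurable_fun_sum _ fun k _ => hc.measurable k)
    (by simpa [hc.sum_eq_one] using ae_eq_zero (C := .univ) (by simpa using hAB))
    (by simpa [hb.sum_eq_one] using ae_eq_zero (A := .univ) (by simpa using hBC))
    (by simpa [hm.sum_eq_one, and_comm, or_comm] using
      ae_eq_zero (B := .univ) (by simpa using hCA))
    (hb.sum_mem_Icc A) (hm.sum_mem_Icc B) (hc.sum_mem_Icc C)
    (by simpa [sum_P, hm.sum_eq_one, hc.sum_eq_one] using hA)
    (by simpa [sum_P, hb.sum_eq_one, hc.sum_eq_one] using hB)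
    (by simpa [sum_P, hb.sum_eq_one, hm.sum_eq_one] using hC)
  refine ⟨E, hE8, h0, fun i => ?_, fun j => ?_, fun k => ?_⟩
  · have hPi := sum_P {i} .univ C
    simp only [Finset.sum_singleton, hm.sum_eq_one, mul_one] at hPi
    exact hPi ▸ hbE _ (hb.measurable i) (hb.mem_Icc i)
  · have hPj := sum_P A {j} .univ
    simp only [Finset.sum_singleton, hc.sum_eq_one, mul_one, mul_comm _ (m j _)] at hPj
    exact hPj ▸ hmE _ (hm.measurable j) (hm.mem_Icc j)
  · have hPk := sum_P .univ B {k}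
    simp only [Finset.sum_singleton, hb.sum_eq_one, one_mul, mul_comm _ (c k _)] at hPk
    exact hPk ▸ hcE _ (hc.measurable k) (hc.mem_Icc k)

theorem exists_isClockwisePart : ∃ W, IsClockwisePart P W A B C := by
  obtain ⟨E, hE8, h0, hbE, hmE, hcE⟩ :=
    exists_clockwise_event_of_isResponse h hb hm hc hP hAB hBC hCA hA hB hC
  have hb' := hb.comp (h.measurable₃.prodMk h.measurable₁)
  have hm' := hm.comp (h.measurable₁.prodMk h.measurable₂)
  have hc' := hc.comp (h.measurable₂.prodMk h.measurable₃)
  have sum_W := hb'.sum_integral_mul_mul hm' hc' (π.restrict E)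
  have zero_on_E {i j k} (hzero : ∀ᵐ ω ∂π, ω ∈ E →
      b i (Z ω, X ω) = 0 ∨ m j (X ω, Y ω) = 0 ∨ c k (Y ω, Z ω) = 0) :
      ∫ ω in E, b i (Z ω, X ω) * m j (X ω, Y ω) * c k (Y ω, Z ω) ∂π = 0 := by
    refine setIntegral_eq_zero_of_ae_eq_zero ?_
    filter_upwards [hzero] with ω hω hωE
    simpa [or_assoc] using hω hωE
  refine ⟨fun i j k => ∫ ω in E, b i (Z ω, X ω) * m j (X ω, Y ω) * c k (Y ω, Z ω) ∂π,
    { nonneg := fun i j k => integral_nonneg (hb'.mul_mul_nonneg hm' hc' i j k)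
      le := fun i j k => ?_
      eq_zero₁ := fun i hi j k => zero_on_E ?_
      eq_zero₂ := fun i j hj k => zero_on_E ?_
      eq_zero₃ := fun i j k hk => zero_on_E ?_
      sum_eq := by simp [sum_W, hb.sum_eq_one, hm.sum_eq_one, hc.sum_eq_one, hE8]
      sum_le₁ := fun i => ?_
      sum_le₂ := fun j => ?_
      sum_le₃ := fun k => ?_ }⟩
  · rw [hP]
    exact setIntegral_le_integral (hb'.integrable_mul_mul hm' hc' π i j k)
      (.of_forall (hb'.mul_mul_nonneg hm' hc' i j k))
  · filter_upwards [h0] with ω hω hωE using .inl (hb.eq_zero_of_sum_eq_zero (hω hωE).1 hi)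
  · filter_upwards [h0] with ω hω hωE using
      .inr (.inl (hm.eq_zero_of_sum_eq_zero (hω hωE).2.1 hj))
  · filter_upwards [h0] with ω hω hωE using
      .inr (.inr (hc.eq_zero_of_sum_eq_zero (hω hωE).2.2 hk))
  · have hW := sum_W {i} .univ .univ
    simp only [Finset.sum_singleton, hm.sum_eq_one, hc.sum_eq_one, mul_one] at hW
    exact hW.trans_le (hbE i)
  · have hW := sum_W .univ {j} .univ
    simp only [Finset.sum_singleton, hb.sum_eq_one, hc.sum_eq_one, one_mul, mul_one] at hW
    exact hW.trans_le (hmE j)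
  · have hW := sum_W .univ .univ {k}
    simp only [Finset.sum_singleton, hb.sum_eq_one, hm.sum_eq_one, one_mul] at hW
    exact hW.trans_le (hcE k)

end Triangle

theorem mergedP_ones_of_sum_eq_three {u : ℝ} (hu : |u| ≤ 1) {i j k l : Fin 2}
    (h : (i + j + k + l : ℕ) = 3) :
    mergedP u (.one i) (.one j, .one k) (.one l) =
      u ^ 2 * (1 - u ^ 2) * (1 - 2 * u ^ 2) ^ 2 / 16 := by
  have huv : uco u 1 = vco u 0 := rfl
  have hv := vco_zero_sq hu
  have hprod : (vco u 0 * vco u 1 ^ 3 + uco u 0 * uco u 1 ^ 3) ^ 2 =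
      u ^ 2 * (1 - u ^ 2) * (1 - 2 * u ^ 2) ^ 2 := by
    rw [huv, vco_one, uco_zero]
    calc (vco u 0 * (-u) ^ 3 + u * vco u 0 ^ 3) ^ 2
        = u ^ 2 * vco u 0 ^ 2 * (vco u 0 ^ 2 - u ^ 2) ^ 2 := by ring
      _ = u ^ 2 * (1 - u ^ 2) * (1 - 2 * u ^ 2) ^ 2 := by rw [hv]; ring
  rw [mergedP_ones, ← hprod]
  fin_cases i <;> fin_cases j <;> fin_cases k <;> fin_cases l <;> simp at h ⊢ <;> ring

theorem mergedP_one_one_one_one {u : ℝ} (hu : |u| ≤ 1) :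
    mergedP u (.one 1) (.one 1, .one 1) (.one 1) = ((1 - u ^ 2) ^ 2 + u ^ 4) ^ 2 / 16 := by
  rw [mergedP_ones, vco_one, ← uco_one_sq hu]
  ring

/-- The expected number of outcomes `1₁` announced by the two outer parties, on the part `W` of the
distribution and with the merged party announcing `m`. -/
noncomputable def oneOneCount (W : Outc → Outc × Outc → Outc → ℝ) (m : Outc × Outc) : ℝ :=
  ∑ c, W (.one 1) m c + ∑ a, W a m (.one 1)

namespace IsClockwisePart

variable {u : ℝ} {W : Outc → Outc × Outc → Outc → ℝ}
  (hW : IsClockwisePart (mergedP u) W {.zero} lightPairs {.zero})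
include hW

theorem tokens_of_ne_zero {a c : Outc} {m : Outc × Outc} (h : W a m c ≠ 0) :
    a.tokens = 1 ∧ m.1.tokens + m.2.tokens = 2 ∧ c.tokens = 1 := by
  have hP : mergedP u a m c ≠ 0 := ((hW.nonneg a m c).lt_of_ne' h |>.trans_le (hW.le a m c)).ne'
  obtain ⟨hsum, hlow, -⟩ := tokens_of_mergedP_ne_zero hP
  have ha : a ≠ .zero := fun ha => h (hW.eq_zero₁ a (by simp [ha]) m c)
  have hm : m.1.tokens + m.2.tokens ≠ 1 := fun hm =>
    h (hW.eq_zero₂ a m (by simp [lightPairs, hm]) c)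
  have hc : c ≠ .zero := fun hc => h (hW.eq_zero₃ a m c (by simp [hc]))
  have one_le_tokens {b : Outc} (hb : b ≠ .zero) : 1 ≤ b.tokens := by
    cases b <;> simp_all [Outc.tokens]
  have := one_le_tokens ha
  have := one_le_tokens hc
  omega

theorem eq_zero_of_tokens_left {a : Outc} (ha : a.tokens ≠ 1) (m : Outc × Outc) (c : Outc) :
    W a m c = 0 :=
  of_not_not fun h => ha (hW.tokens_of_ne_zero h).1

theorem eq_zero_of_tokens_mid {m : Outc × Outc} (hm : m.1.tokens + m.2.tokens ≠ 2) (a c : Outc) :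
    W a m c = 0 :=
  of_not_not fun h => hm (hW.tokens_of_ne_zero h).2.1

theorem eq_zero_of_tokens_right {c : Outc} (hc : c.tokens ≠ 1) (a : Outc) (m : Outc × Outc) :
    W a m c = 0 :=
  of_not_not fun h => hc (hW.tokens_of_ne_zero h).2.2

theorem sum_right (a : Outc) (m : Outc × Outc) :
    ∑ c, W a m c = W a m (.one 0) + W a m (.one 1) :=
  Outc.sum_eq_of_tokens fun _ hc => hW.eq_zero_of_tokens_right hc a m

theorem sum_left (m : Outc × Outc) (c : Outc) :
    ∑ a, W a m c = W (.one 0) m c + W (.one 1) m c :=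
  Outc.sum_eq_of_tokens fun _ ha => hW.eq_zero_of_tokens_left ha m c

theorem oneOneCount_eq (m : Outc × Outc) : oneOneCount W m =
    W (.one 1) m (.one 0) + W (.one 0) m (.one 1) + 2 * W (.one 1) m (.one 1) := by
  rw [oneOneCount, hW.sum_left, hW.sum_right]
  ring

theorem sum_oneOneCount_eq : ∑ m, oneOneCount W m =
    oneOneCount W (.zero, .two) + oneOneCount W (.two, .zero) +
      ∑ j, ∑ k, oneOneCount W (.one j, .one k) := by
  have count_eq_zero (m : Outc × Outc) (hm : m.1.tokens + m.2.tokens ≠ 2) :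
      oneOneCount W m = 0 := by
    simp only [oneOneCount, hW.eq_zero_of_tokens_mid hm, Finset.sum_const_zero, add_zero]
  simp (disch := decide) [Fintype.sum_prod_type, Outc.sum_eq, count_eq_zero]
  ring

theorem sq_div_four_le_sum_oneOneCount (hu : |u| ≤ 1) : u ^ 2 / 4 ≤ ∑ m, oneOneCount W m := by
  have hleft : ∑ m, ∑ c, W (.one 0) m c ≤ (1 - u ^ 2) / 8 := by
    simpa only [Finset.sum_singleton, sum_mergedP_one_zero hu, vco_zero_sq hu] using
      hW.sum_le₁ (.one 0)
  have hright : ∑ a, ∑ m, W a m (.one 0) ≤ (1 - u ^ 2) / 8 := by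
    simpa only [sum_mergedP_lightPairs_one hu, vco_zero_sq hu] using hW.sum_le₃ (.one 0)
  have htotal_left : ∑ m, ∑ c, W (.one 0) m c + ∑ m, ∑ c, W (.one 1) m c = 1 / 8 := by
    rw [← hW.sum_eq, Outc.sum_eq_of_tokens fun a ha => ?_]
    simp only [hW.eq_zero_of_tokens_left ha, Finset.sum_const_zero]
  have htotal_right : ∑ a, ∑ m, W a m (.one 0) + ∑ a, ∑ m, W a m (.one 1) = 1 / 8 := by
    simp only [← hW.sum_eq, hW.sum_right, Finset.sum_add_distrib]
  have hcount : ∑ m, oneOneCount W m =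
      ∑ m, ∑ c, W (.one 1) m c + ∑ a, ∑ m, W a m (.one 1) := by
    rw [Finset.sum_comm (f := fun a m => W a m (.one 1))]
    exact Finset.sum_add_distrib
  linarith

theorem sum_ones_le (m : Outc × Outc) :
    W (.one 0) m (.one 0) + W (.one 0) m (.one 1) + W (.one 1) m (.one 0) +
      W (.one 1) m (.one 1) ≤ ∑ c, mergedP u .zero m c := by
  have hle := hW.sum_le₂ m
  rw [Outc.sum_eq_of_tokens fun a ha => by
    simp only [hW.eq_zero_of_tokens_left ha, Finset.sum_const_zero], hW.sum_right,
    hW.sum_right, Finset.sum_singleton] at hle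
  linarith

theorem oneOneCount_le_add (m : Outc × Outc) :
    oneOneCount W m ≤ ∑ c, mergedP u .zero m c + W (.one 1) m (.one 1) := by
  rw [hW.oneOneCount_eq]
  linarith [hW.sum_ones_le m, hW.nonneg (.one 0) m (.one 0)]

theorem oneOneCount_le_two_mul (m : Outc × Outc) :
    oneOneCount W m ≤ 2 * ∑ c, mergedP u .zero m c := by
  linarith [hW.oneOneCount_le_add m, hW.sum_ones_le m, hW.nonneg (.one 0) m (.one 0),
    hW.nonneg (.one 0) m (.one 1), hW.nonneg (.one 1) m (.one 0)]

theorem oneOneCount_le_mergedP (m : Outc × Outc) :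
    oneOneCount W m ≤ mergedP u (.one 1) m (.one 0) + mergedP u (.one 0) m (.one 1) +
      2 * mergedP u (.one 1) m (.one 1) := by
  rw [hW.oneOneCount_eq]
  gcongr <;> exact hW.le _ _ _

theorem oneOneCount_zero_two_nonpos : oneOneCount W (.zero, .two) ≤ 0 := by
  simpa only [sum_mergedP_zero_zero_two, mul_zero] using hW.oneOneCount_le_two_mul (.zero, .two)

theorem oneOneCount_two_zero_le (hu : |u| ≤ 1) : oneOneCount W (.two, .zero) ≤ u ^ 2 / 8 := by
  have hle := hW.oneOneCount_le_mergedP (.two, .zero)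
  simp only [mergedP_two_zero, vco_zero_sq hu, vco_one, neg_sq] at hle
  linarith

theorem oneOneCount_one_zero_one_zero_le (hu : |u| ≤ 1) :
    oneOneCount W (.one 0, .one 0) ≤ (1 - u ^ 2) ^ 2 / 8 := by
  have hle := hW.oneOneCount_le_two_mul (.one 0, .one 0)
  rw [sum_mergedP_zero_ones, vco_zero_sq hu] at hle
  linarith

theorem oneOneCount_ones_le (hu : |u| ≤ 1) {j k : Fin 2} (hjk : (j + k : ℕ) = 1) :
    oneOneCount W (.one j, .one k) ≤ u ^ 2 * (1 - u ^ 2) * (1 + (1 - 2 * u ^ 2) ^ 2) / 16 := by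
  have hle := hW.oneOneCount_le_add (.one j, .one k)
  have hW11 := (hW.le (.one 1) (.one j, .one k) (.one 1)).trans_eq
    (mergedP_ones_of_sum_eq_three hu (by simp; omega))
  have hv : vco u j ^ 2 * vco u k ^ 2 = u ^ 2 * (1 - u ^ 2) := by
    fin_cases j <;> fin_cases k <;> simp [vco_zero_sq hu, vco_one, mul_comm] at hjk ⊢
  rw [sum_mergedP_zero_ones, hv] at hle
  linarith

theorem oneOneCount_one_one_one_one_le (hu : |u| ≤ 1) : oneOneCount W (.one 1, .one 1) ≤
    (u ^ 2 * (1 - u ^ 2) * (1 - 2 * u ^ 2) ^ 2 + ((1 - u ^ 2) ^ 2 + u ^ 4) ^ 2) / 8 := by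
  have hle := hW.oneOneCount_le_mergedP (.one 1, .one 1)
  rw [mergedP_ones_of_sum_eq_three hu rfl, mergedP_ones_of_sum_eq_three hu rfl,
    mergedP_one_one_one_one hu] at hle
  linarith

theorem pow_four_le_half (hu : |u| < 1) : u ^ 4 ≤ 1 / 2 := by
  have hsum := hW.sq_div_four_le_sum_oneOneCount hu.le
  rw [hW.sum_oneOneCount_eq] at hsum
  simp only [Fin.sum_univ_two] at hsum
  have hkey : 0 ≤ (1 - u ^ 2) ^ 2 * (1 - 2 * u ^ 4) := by
    linarith [hW.oneOneCount_zero_two_nonpos, hW.oneOneCount_two_zero_le hu.le,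
      hW.oneOneCount_one_zero_one_zero_le hu.le, hW.oneOneCount_ones_le hu.le (j := 0) (k := 1) rfl,
      hW.oneOneCount_ones_le hu.le (j := 1) (k := 0) rfl, hW.oneOneCount_one_one_one_one_le hu.le]
  have hpos : 0 < (1 - u ^ 2) ^ 2 := pow_pos (sub_pos.2 ((sq_lt_one_iff_abs_lt_one u).2 hu)) 2
  linarith [nonneg_of_mul_nonneg_right hkey hpos]

end IsClockwisePart

section ProductSources

open ProbabilityTheory

variable {α β γ : Type*} [MeasurableSpace α] [MeasurableSpace β] [MeasurableSpace γ]

theorem indepFun_of_measurePreserving_prodMk {Ω : Type*} [MeasurableSpace Ω] {π : Measure Ω}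
    {μ : Measure α} {ν : Measure β} [IsProbabilityMeasure μ] [IsProbabilityMeasure ν]
    {X : Ω → α} {Y : Ω → β} (h : MeasurePreserving (fun ω => (X ω, Y ω)) π (μ.prod ν)) :
    X ⟂ᵢ[π] Y := by
  have hX : MeasurePreserving X π μ := measurePreserving_fst.comp h
  have hY : MeasurePreserving Y π ν := measurePreserving_snd.comp h
  have : IsProbabilityMeasure π :=
    (Measure.isProbabilityMeasure_map_iff hX.aemeasurable).1 (hX.map_eq ▸ inferInstance)
  rw [indepFun_iff_map_prod_eq_prod_map_map hX.aemeasurable hY.aemeasurable, h.map_eq, hX.map_eq,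
    hY.map_eq]

variable (μ : Measure α) (ν : Measure β) (ρ : Measure γ) [IsProbabilityMeasure μ]
  [IsProbabilityMeasure ν] [IsProbabilityMeasure ρ]

theorem indepSources_prod : IndepSources (fun p : α × β × γ => p.1) (fun p => p.2.1)
    (fun p => p.2.2) (μ.prod (ν.prod ρ)) where
  measurable₁ := by fun_prop
  measurable₂ := by fun_prop
  measurable₃ := by fun_prop
  indep₁ := indepFun_of_measurePreserving_prodMk (.id _)
  indep₂ := indepFun_of_measurePreserving_prodMk <|
    (measurePreserving_prodAssoc ν ρ μ).comp Measure.measurePreserving_swap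
  indep₃ := indepFun_of_measurePreserving_prodMk <|
    Measure.measurePreserving_swap.comp (measurePreserving_prodAssoc μ ν ρ).symm

theorem integral_response_prod {ι κ τ : Type*} [Fintype ι] [Fintype κ] [Fintype τ]
    {b : ι → γ × α → ℝ} {m : κ → α × β → ℝ} {c : τ → β × γ → ℝ} (hb : IsResponse b)
    (hm : IsResponse m) (hc : IsResponse c) (i : ι) (j : κ) (k : τ) :
    ∫ p, b i (p.2.2, p.1) * m j (p.1, p.2.1) * c k (p.2.1, p.2.2) ∂μ.prod (ν.prod ρ) =
      ∫ x, ∫ y, ∫ z, b i (z, x) * m j (x, y) * c k (y, z) ∂ρ ∂ν ∂μ := by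
  rw [integral_prod _ ((hb.comp (by fun_prop)).integrable_mul_mul (hm.comp (by fun_prop))
    (hc.comp (by fun_prop)) _ i j k)]
  congr 1 with x
  exact integral_prod _ ((hb.comp (by fun_prop)).integrable_mul_mul (hm.comp (by fun_prop))
    (hc.comp (by fun_prop)) _ i j k)

end ProductSources

theorem pow_four_le_half_of_mergedP_eq_integral {Ω α β γ : Type*} [MeasurableSpace Ω]
    [MeasurableSpace α] [MeasurableSpace β] [MeasurableSpace γ] {π : Measure Ω}
    [IsProbabilityMeasure π] {X : Ω → α} {Y : Ω → β} {Z : Ω → γ} {b : Outc → γ × α → ℝ}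
    {m : Outc × Outc → α × β → ℝ} {c : Outc → β × γ → ℝ} (h : IndepSources X Y Z π)
    (hb : IsResponse b) (hm : IsResponse m) (hc : IsResponse c) {u : ℝ} (hu : |u| < 1)
    (hP : ∀ i j k, mergedP u i j k =
      ∫ ω, b i (Z ω, X ω) * m j (X ω, Y ω) * c k (Y ω, Z ω) ∂π) : u ^ 4 ≤ 1 / 2 := by
  obtain ⟨W, hW⟩ : ∃ W, IsClockwisePart (mergedP u) W {.zero} lightPairs {.zero} :=
    exists_isClockwisePart h hb hm hc hP
      (by simpa using fun _ _ hm c => mergedP_zero_lightPairs u hm c)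
      (by simpa using fun a _ _ hm => mergedP_lightPairs_zero u a hm)
      (by simpa using mergedP_zero_zero u)
      (by simpa using (sum_mergedP_zero_left hu.le).ge)
      (sum_mergedP_lightPairs hu.le).ge
      (by simpa using (sum_mergedP_zero_right hu.le).ge)
  exact hW.pow_four_le_half hu

theorem stmt_2_general (u : ℝ) (hu : 1 / 2 < u ^ 4) (hu1 : |u| < 1) :
    ¬ ∃ (Λ₁ Λ₂ Λ₃ : Type*)
        (m₁ : MeasurableSpace Λ₁) (m₂ : MeasurableSpace Λ₂) (m₃ : MeasurableSpace Λ₃)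
        (μ₁ : @Measure Λ₁ m₁) (μ₂ : @Measure Λ₂ m₂) (μ₃ : @Measure Λ₃ m₃)
        (pB : Outc → Λ₁ → Λ₃ → ℝ) (pM : Outc → Outc → Λ₁ → Λ₂ → ℝ)
        (pC : Outc → Λ₂ → Λ₃ → ℝ),
      IsProbabilityMeasure μ₁ ∧ IsProbabilityMeasure μ₂ ∧ IsProbabilityMeasure μ₃ ∧
      (∀ a, @Measurable _ _ (m₁.prod m₃) _ fun q : Λ₁ × Λ₃ => pB a q.1 q.2) ∧
      (∀ a a', @Measurable _ _ (m₁.prod m₂) _ fun q : Λ₁ × Λ₂ => pM a a' q.1 q.2) ∧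
      (∀ a, @Measurable _ _ (m₂.prod m₃) _ fun q : Λ₂ × Λ₃ => pC a q.1 q.2) ∧
      (∀ x y, (∀ a, 0 ≤ pB a x y) ∧ ∑ a, pB a x y = 1) ∧
      (∀ x y, (∀ a a', 0 ≤ pM a a' x y) ∧ ∑ a, ∑ a', pM a a' x y = 1) ∧
      (∀ x y, (∀ a, 0 ≤ pC a x y) ∧ ∑ a, pC a x y = 1) ∧
      (∀ a₁ a₂ a₃ a₄ : Outc,
        ringP 4 u ![a₁, a₂, a₃, a₄] =
          ∫ x₁, ∫ x₂, ∫ x₃,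
            pB a₁ x₁ x₃ * pM a₂ a₃ x₁ x₂ * pC a₄ x₂ x₃ ∂μ₃ ∂μ₂ ∂μ₁) := by
  rintro ⟨Λ₁, Λ₂, Λ₃, _, _, _, μ₁, μ₂, μ₃, pB, pM, pC, _, _, _, mB, mM, mC, hB, hM, hC, hP⟩
  have rB : IsResponse fun a (p : Λ₃ × Λ₁) => pB a p.2 p.1 :=
    ⟨fun a => (mB a).comp measurable_swap, fun a p => (hB p.2 p.1).1 a, fun p => (hB p.2 p.1).2⟩
  have rM : IsResponse fun (m : Outc × Outc) (p : Λ₁ × Λ₂) => pM m.1 m.2 p.1 p.2 :=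
    ⟨fun m => mM m.1 m.2, fun m p => (hM p.1 p.2).1 m.1 m.2, fun p => by
      rw [Fintype.sum_prod_type, (hM p.1 p.2).2]⟩
  have rC : IsResponse fun a (p : Λ₂ × Λ₃) => pC a p.1 p.2 :=
    ⟨mC, fun a p => (hC p.1 p.2).1 a, fun p => (hC p.1 p.2).2⟩
  refine hu.not_ge <| pow_four_le_half_of_mergedP_eq_integral (indepSources_prod μ₁ μ₂ μ₃)
    rB rM rC hu1 fun a m c => ?_
  rw [integral_response_prod μ₁ μ₂ μ₃ rB rM rC a m c]
  exact hP a m.1 m.2 c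

/-- For every real `u` with `0.841 < u < 1`, the square-network quantum
distribution `P_Q^□` is nonlocal on the triangle network obtained by merging parties
`A₂` and `A₃` into a single party `M` (sources: `λ₁` between `B = A₁` and `M`, `λ₂`
between `M` and `C = A₄`, `λ₃` between `C` and `B`). -/
theorem stmt_2 (u : ℝ) (hu : (0.841 : ℝ) < u) (hu1 : u < 1) :
    ¬ ∃ (Λ₁ Λ₂ Λ₃ : Type)
        (m₁ : MeasurableSpace Λ₁) (m₂ : MeasurableSpace Λ₂) (m₃ : MeasurableSpace Λ₃)
        (μ₁ : @Measure Λ₁ m₁) (μ₂ : @Measure Λ₂ m₂) (μ₃ : @Measure Λ₃ m₃)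
        (pB : Outc → Λ₁ → Λ₃ → ℝ) (pM : Outc → Outc → Λ₁ → Λ₂ → ℝ)
        (pC : Outc → Λ₂ → Λ₃ → ℝ),
      IsProbabilityMeasure μ₁ ∧ IsProbabilityMeasure μ₂ ∧ IsProbabilityMeasure μ₃ ∧
      (∀ a, @Measurable _ _ (m₁.prod m₃) _ fun q : Λ₁ × Λ₃ => pB a q.1 q.2) ∧
      (∀ a a', @Measurable _ _ (m₁.prod m₂) _ fun q : Λ₁ × Λ₂ => pM a a' q.1 q.2) ∧
      (∀ a, @Measurable _ _ (m₂.prod m₃) _ fun q : Λ₂ × Λ₃ => pC a q.1 q.2) ∧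
      (∀ x y, (∀ a, 0 ≤ pB a x y) ∧ ∑ a, pB a x y = 1) ∧
      (∀ x y, (∀ a a', 0 ≤ pM a a' x y) ∧ ∑ a, ∑ a', pM a a' x y = 1) ∧
      (∀ x y, (∀ a, 0 ≤ pC a x y) ∧ ∑ a, pC a x y = 1) ∧
      (∀ a₁ a₂ a₃ a₄ : Outc,
        ringP 4 u ![a₁, a₂, a₃, a₄] =
          ∫ x₁, ∫ x₂, ∫ x₃,
            pB a₁ x₁ x₃ * pM a₂ a₃ x₁ x₂ * pC a₄ x₂ x₃ ∂μ₃ ∂μ₂ ∂μ₁) := by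
  exact stmt_2_general u (by linarith [pow_lt_pow_left₀ hu (by norm_num) four_ne_zero])
    (abs_lt.2 ⟨by linarith, hu1⟩)
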